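/- Let G be a parity game, let P be one of the two players, and let D be a P-dominion in G. Then the P-attractor Attr_P(D, G) is also a P-dominion in G. -/

import Mathlib

/-!
The attractor `A` is closed under the moves required of a dominion directly from its inductive
definition. That `P` wins inside `A` from every vertex of `A` is shown by induction on membership
in the attractor. For a vertex of `D`, the strategy winning inside `D` is extended by arbitrary
moves inside `A`; opponent moves cannot leave `D`, so the play stays in `D` and is won
(`winsWithinFrom_mono`). For any other vertex, `P` makes one move (or lets the opponent make one)
to a vertex `w` covered by the induction hypothesis, then forgets the first vertex of the history
and follows a strategy winning from `w` (`winsWithinFrom_of_step`); this suffices because the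
winner of a play does not change when its first vertex is dropped (`winsPlay_of_tail`). Inducting
on the inductive predicate itself makes attractor ranks unnecessary.
-/

/-- The two players of a parity game. -/
inductive Player where
  | even : Player
  | odd : Player
deriving DecidableEq

/-- The opponent of a player. -/
def Player.opp : Player → Player
  | even => odd
  | odd => even

/-- A natural number has the parity of the given player. -/
def Player.matchesPriority : Player → ℕ → Prop
  | even => fun p => Even p
  | odd => fun p => Odd p

/-- A parity game on a vertex type `V`: an ownership function, an edge relation in which
every vertex has at least one successor, and a priority function. -/
structure ParityGame (V : Type*) where
  owner : V → Player
  edge : V → V → Prop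
  priority : V → ℕ
  succ_nonempty : ∀ v, ∃ w, edge v w

namespace ParityGame

variable {V : Type*} (G : ParityGame V)

/-- A play is an infinite sequence of vertices following edges. -/
def IsPlay (π : ℕ → V) : Prop := ∀ i, G.edge (π i) (π (i + 1))

/-- Priority `p` occurs infinitely often along the play `π`. -/
def InfOften (π : ℕ → V) (p : ℕ) : Prop := ∀ N, ∃ i, N ≤ i ∧ G.priority (π i) = p

/-- A play is winning for a player if the highest priority occurring infinitely often
along it has that player's parity. -/
def WinsPlay (P : Player) (π : ℕ → V) : Prop :=
  ∃ p, G.InfOften π p ∧ (∀ q, G.InfOften π q → q ≤ p) ∧ P.matchesPriority p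

/-- A play `π` agrees with the strategy `σ` of player `P` (a strategy maps a history
together with the current vertex to the next vertex). -/
def Agrees (P : Player) (σ : List V → V → V) (π : ℕ → V) : Prop :=
  ∀ i, G.owner (π i) = P → π (i + 1) = σ (List.ofFn fun j : Fin i => π j) (π i)

/-- `σ` is a valid strategy for player `P`: at `P`'s vertices it prescribes a successor. -/
def ValidFor (P : Player) (σ : List V → V → V) : Prop :=
  ∀ hist v, G.owner v = P → G.edge v (σ hist v)

/-- Player `P` has a winning strategy from vertex `v`. -/
def WinsFrom (P : Player) (v : V) : Prop :=
  ∃ σ, G.ValidFor P σ ∧ ∀ π, π 0 = v → G.IsPlay π → G.Agrees P σ π → G.WinsPlay P π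

/-- The winning region of player `P`. -/
def winningRegion (P : Player) : Set V := {v | G.WinsFrom P v}

/-- Player `P` has a winning strategy from `v` in the subgame induced by the set `D`:
a strategy that at `P`'s vertices of `D` prescribes successors inside `D` and wins
every play that starts at `v`, stays in `D` and agrees with it. -/
def WinsWithinFrom (P : Player) (D : Set V) (v : V) : Prop :=
  ∃ σ : List V → V → V,
    (∀ hist w, w ∈ D → G.owner w = P → σ hist w ∈ D ∧ G.edge w (σ hist w)) ∧
    ∀ π, π 0 = v → G.IsPlay π → (∀ i, π i ∈ D) → G.Agrees P σ π → G.WinsPlay P π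

/-- `D` is a dominion for player `P` in the subgame of `G` induced by the vertex set `U`:
`D ⊆ U`, every `P`-vertex of `D` has a successor in `D`, every opponent vertex of `D`
has all of its successors (within the subgame) in `D`, and `P` wins from every vertex
of `D` in the subgame induced by `D`. -/
def IsDominionIn (P : Player) (U D : Set V) : Prop :=
  D ⊆ U ∧
  (∀ v ∈ D, G.owner v = P → ∃ w ∈ D, G.edge v w) ∧
  (∀ v ∈ D, G.owner v ≠ P → ∀ w ∈ U, G.edge v w → w ∈ D) ∧
  ∀ v ∈ D, G.WinsWithinFrom P D v

/-- `D` is a dominion for player `P` in `G`. -/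
def IsDominion (P : Player) (D : Set V) : Prop := G.IsDominionIn P Set.univ D

/-- The attractor for player `P` of the set `X`, computed in the subgame of `G` induced
by the vertex set `U`: the least set containing `X` such that a `P`-vertex with some
successor in it belongs to it, and an opponent vertex all of whose successors (within
the subgame) are in it belongs to it. -/
inductive AttrIn (P : Player) (U X : Set V) : V → Prop
  | base {v} : v ∈ X → AttrIn P U X v
  | player {v w} : v ∈ U → G.owner v = P → w ∈ U → G.edge v w → AttrIn P U X w →
      AttrIn P U X v
  | opponent {v} : v ∈ U → G.owner v ≠ P → (∀ w ∈ U, G.edge v w → AttrIn P U X w) →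
      AttrIn P U X v

/-- The attractor, within subgame `U`, as a set. -/
def attrIn (P : Player) (U X : Set V) : Set V := {v | G.AttrIn P U X v}

/-- The attractor `Attr_P(X, G)` for player `P` of the set `X` in the whole game `G`. -/
def attractor (P : Player) (X : Set V) : Set V := G.attrIn P Set.univ X

/-- `T` is a trap for player `P`: every `P`-vertex of `T` has all of its successors in
`T`, and every opponent vertex of `T` has at least one successor in `T`. -/
def IsTrap (P : Player) (T : Set V) : Prop :=
  (∀ v ∈ T, G.owner v = P → ∀ w, G.edge v w → w ∈ T) ∧
  (∀ v ∈ T, G.owner v ≠ P → ∃ w ∈ T, G.edge v w)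

end ParityGame

namespace ParityGame

variable {V : Type*} {G : ParityGame V} {P : Player} {A D : Set V}

theorem infOften_tail {π : ℕ → V} {p : ℕ} :
    G.InfOften (fun i => π (i + 1)) p ↔ G.InfOften π p := by
  constructor
  · intro h N
    obtain ⟨i, hi, hp⟩ := h N
    exact ⟨i + 1, by omega, hp⟩
  · intro h N
    obtain ⟨i, hi, hp⟩ := h (N + 1)
    obtain ⟨j, rfl⟩ : ∃ j, i = j + 1 := ⟨i - 1, by omega⟩
    exact ⟨j, by omega, hp⟩

theorem winsPlay_of_tail {π : ℕ → V} (h : G.WinsPlay P (fun i => π (i + 1))) :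
    G.WinsPlay P π := by
  obtain ⟨p, hp, hmax, hpar⟩ := h
  exact ⟨p, infOften_tail.1 hp, fun q hq => hmax q (infOften_tail.2 hq), hpar⟩

/-- The move function `m` sends each vertex of `P` in `A` to a successor in `A`. -/
def MovesWithin (G : ParityGame V) (P : Player) (A : Set V) (m : V → V) : Prop :=
  ∀ u ∈ A, G.owner u = P → m u ∈ A ∧ G.edge u (m u)

/-- If `P` moves by `m` for one step from `v`, and wins inside `A` from every vertex that can be
reached in this way, then `P` wins inside `A` from `v`. -/
theorem winsWithinFrom_of_step {m : V → V} (hm : G.MovesWithin P A m) {v : V}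
    (h : ∀ w ∈ A, G.edge v w → (G.owner v = P → w = m v) → G.WinsWithinFrom P A w) :
    G.WinsWithinFrom P A v := by
  -- a strategy `S w` for each `w`, winning from `w` whenever `P` can win from there
  have key : ∀ w, ∃ σ : List V → V → V,
      (∀ hist u, u ∈ A → G.owner u = P → σ hist u ∈ A ∧ G.edge u (σ hist u)) ∧
      (G.WinsWithinFrom P A w → ∀ π, π 0 = w → G.IsPlay π → (∀ i, π i ∈ A) →
        G.Agrees P σ π → G.WinsPlay P π) := by
    intro w
    by_cases hw : G.WinsWithinFrom P A w
    · obtain ⟨σ, h1, h2⟩ := hw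
      exact ⟨σ, h1, fun _ => h2⟩
    · exact ⟨fun _ => m, fun _ => hm, fun hw' => absurd hw' hw⟩
  choose S hS hwin using key
  -- The second vertex of the play is the head of the shortened history `t`, or the current
  -- vertex `u` when `t` is empty.
  refine ⟨fun hist u => match hist with
    | [] => m u
    | _ :: t => S (t.headD u) t u, ?_, ?_⟩
  · rintro (_ | ⟨a, t⟩) u hu ho
    · exact hm u hu ho
    · exact hS _ t u hu ho
  · intro π h0 hplay hA hag
    have hw : G.WinsWithinFrom P A (π 1) := by
      refine h _ (hA 1) (h0 ▸ hplay 0) fun ho => ?_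
      have := hag 0 (by rw [h0]; exact ho)
      simpa [h0] using this
    apply winsPlay_of_tail
    refine hwin (π 1) hw _ rfl (fun i => hplay (i + 1)) (fun i => hA (i + 1)) ?_
    intro i ho
    have hi := hag (i + 1) ho
    rw [List.ofFn_succ] at hi
    have hhead : (List.ofFn fun j : Fin i => π (j + 1)).headD (π (i + 1)) = π 1 := by
      cases i <;> simp [List.ofFn_succ]
    refine hi.trans ?_
    change S ((List.ofFn fun j : Fin i => π (j + 1)).headD (π (i + 1))) _ _ = _
    rw [hhead]
    rfl

/-- A win inside `D` is a win inside any larger `A` when the opponent cannot leave `D`; the move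
function `m` supplies the moves on the rest of `A`. -/
theorem winsWithinFrom_mono {m : V → V} (hm : G.MovesWithin P A m) (hDA : D ⊆ A)
    (hopp : ∀ v ∈ D, G.owner v ≠ P → ∀ w, G.edge v w → w ∈ D) {v : V} (hv : v ∈ D)
    (h : G.WinsWithinFrom P D v) : G.WinsWithinFrom P A v := by
  classical
  obtain ⟨σ, hσ, hwin⟩ := h
  refine ⟨fun hist u => if u ∈ D then σ hist u else m u, ?_, ?_⟩
  · intro hist u hu ho
    by_cases huD : u ∈ D
    · simpa [huD] using ⟨hDA (hσ hist u huD ho).1, (hσ hist u huD ho).2⟩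
    · simpa [huD] using hm u hu ho
  · intro π h0 hplay _ hag
    have hD : ∀ i, π i ∈ D := by
      intro i
      induction i with
      | zero => exact h0 ▸ hv
      | succ i ih =>
        by_cases ho : G.owner (π i) = P
        · have := hag i ho
          simp only [ih, if_true] at this
          rw [this]
          exact (hσ _ _ ih ho).1
        · exact hopp _ ih ho _ (hplay i)
    refine hwin π h0 hplay hD fun i ho => ?_
    have := hag i ho
    simpa only [hD i, if_true] using this

end ParityGame

/-- The `P`-attractor of a `P`-dominion is itself a `P`-dominion. -/
theorem attractor_of_dominion_isDominion {V : Type*} [Finite V] (G : ParityGame V)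
    (P : Player) (D : Set V) (hD : G.IsDominion P D) :
    G.IsDominion P (G.attractor P D) := by
  classical
  obtain ⟨-, hmove, hopp, hwin⟩ := hD
  set A := G.attractor P D with hAdef
  have hDA : D ⊆ A := fun v hv => .base hv
  have hAmove : ∀ v ∈ A, G.owner v = P → ∃ w ∈ A, G.edge v w := by
    intro v hv ho
    cases hv with
    | base hv =>
      obtain ⟨w, hw, he⟩ := hmove v hv ho
      exact ⟨w, hDA hw, he⟩
    | player _ _ _ he hw => exact ⟨_, hw, he⟩
    | opponent _ ho' _ => exact absurd ho ho'
  have hAopp : ∀ v ∈ A, G.owner v ≠ P → ∀ w ∈ Set.univ, G.edge v w → w ∈ A := by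
    intro v hv ho w hw he
    cases hv with
    | base hv => exact hDA (hopp v hv ho w hw he)
    | player _ ho' _ _ _ => exact absurd ho' ho
    | opponent _ _ h => exact h w hw he
  obtain ⟨m, hm⟩ : ∃ m, G.MovesWithin P A m := by
    have : ∀ v, ∃ w, v ∈ A → G.owner v = P → w ∈ A ∧ G.edge v w := by
      intro v
      by_cases h : v ∈ A ∧ G.owner v = P
      · obtain ⟨w, hw⟩ := hAmove v h.1 h.2
        exact ⟨w, fun _ _ => hw⟩
      · exact ⟨v, fun h1 h2 => absurd ⟨h1, h2⟩ h⟩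
    choose m hm using this
    exact ⟨m, hm⟩
  refine ⟨Set.subset_univ _, hAmove, hAopp, fun v hv => ?_⟩
  induction hv with
  | base hv =>
    exact ParityGame.winsWithinFrom_mono hm hDA
      (fun v hv ho w he => hopp v hv ho w trivial he) hv (hwin _ hv)
  | @player v w _ ho _ he hw ih =>
    have hm' : G.MovesWithin P A (Function.update m v w) := by
      intro u hu huo
      by_cases huv : u = v
      · subst huv
        simpa using ⟨hw, he⟩
      · simpa [huv] using hm u hu huo
    refine ParityGame.winsWithinFrom_of_step hm' fun w' _ _ hw' => ?_
    have : w' = w := by simpa using hw' ho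
    exact this ▸ ih
  | opponent _ _ _ ih =>
    exact ParityGame.winsWithinFrom_of_step hm fun w _ he _ => ih w trivial he
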